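/- The conditional expectation of the split composite likelihood ratio statistic at the true parameter given the second half of the sample is almost surely at most one: E_{θ*}[U_{α,β,n}^0(θ*) | σ(X_n^1)] ≤ 1 almost surely, for every n ∈ ℕ. -/

import Mathlib

open MeasureTheory ENNReal
open scoped BigOperators Classical

noncomputable section

/-- Division in `ℝ≥0∞` with the convention that the ratio is `0` when the
denominator is `0`. -/
def safeDiv (a b : ℝ≥0∞) : ℝ≥0∞ := if b = 0 then 0 else a / b

variable {d : ℕ} {π : Fin d → Type*} [∀ i, MeasurableSpace (π i)]

/-- The marginal density on the coordinates in `S`, obtained by integrating a density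
out over the coordinates in `[d] \ S` (as a function of the full vector, depending only
on the coordinates in `S`). -/
def marginal (μ : ∀ i, Measure (π i)) (S : Finset (Fin d))
    (f : (∀ i, π i) → ℝ≥0∞) : (∀ i, π i) → ℝ≥0∞ :=
  MeasureTheory.lmarginal μ Sᶜ f

/-- The conditional density of the coordinates in `T1` given the coordinates in `T2`,
with the convention that the ratio is `0` when the denominator is `0`. -/
def condDens (μ : ∀ i, Measure (π i)) (T1 T2 : Finset (Fin d))
    (f : (∀ i, π i) → ℝ≥0∞) (x : ∀ i, π i) : ℝ≥0∞ :=
  safeDiv (marginal μ (T1 ∪ T2) f x) (marginal μ T2 f x)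

/-- `𝕊_d`: the nonempty subsets of `[d]`. -/
abbrev Sd (d : ℕ) := {S : Finset (Fin d) // S.Nonempty}

/-- `𝕋_d`: ordered pairs of disjoint nonempty subsets of `[d]`. -/
abbrev Td (d : ℕ) := {T : Finset (Fin d) × Finset (Fin d) //
  T.1.Nonempty ∧ T.2.Nonempty ∧ Disjoint T.1 T.2}

/-- The individual composite likelihood
`p_{α,β}(x;θ) = ∏_S p_S(x_S;θ)^(α_S/γ) ∏_T p(x_{T←}|x_{T→};θ)^(β_T/γ)`,
where `f = p(·;θ)` is the joint density. -/
def compLik (μ : ∀ i, Measure (π i)) (α : Sd d → ℝ) (β : Td d → ℝ) (γ : ℝ)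
    (f : (∀ i, π i) → ℝ≥0∞) (x : ∀ i, π i) : ℝ≥0∞ :=
  (∏ S : Sd d, marginal μ S.1 f x ^ (α S / γ)) *
  (∏ T : Td d, condDens μ T.1.1 T.1.2 f x ^ (β T / γ))

/-!
For a marginal likelihood ratio, integrating out the other coordinates gives
`∫ (g_S / f_S) f ≤ ∫ g`. A conditional likelihood ratio is bounded by the same fact used twice:
integrating out everything but `x_{T←}, x_{T→}` replaces the ratio times `f` by
`(f_{T→} / g_{T→}) g`, a marginal ratio with the roles of `f` and `g` exchanged. The exponents of
the composite likelihood sum to one, so Hölder's inequality bounds the expected composite likelihood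
ratio of one observation by one. Independence within the first half of the sample makes this
multiplicative, and independence of the second half lets the estimator be frozen under the
conditional expectation.
-/

lemma safeDiv_mul_le (a b : ℝ≥0∞) : safeDiv a b * b ≤ a := by
  unfold safeDiv
  split_ifs with hb
  · simp
  · rw [mul_comm]
    exact ENNReal.mul_div_le

lemma safeDiv_mul_comm (a b c : ℝ≥0∞) : safeDiv a b * c = safeDiv c b * a := by
  unfold safeDiv
  split_ifs
  · simp
  · simp only [div_eq_mul_inv]
    ring

lemma safeDiv_safeDiv_mul_le (a b c : ℝ≥0∞) : safeDiv a (safeDiv b c) * b ≤ a * c := by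
  by_cases hc : c = 0
  · simp [safeDiv, hc]
  by_cases hc_top : c = ⊤
  · simp [safeDiv, hc_top]
  have hb : safeDiv b c * c = b := by
    rw [safeDiv, if_neg hc, ENNReal.div_mul_cancel hc hc_top]
  calc safeDiv a (safeDiv b c) * b
      = safeDiv a (safeDiv b c) * safeDiv b c * c := by rw [mul_assoc, hb]
    _ ≤ a * c := by gcongr; exact safeDiv_mul_le _ _

lemma safeDiv_mul_mul (a b a' b' : ℝ≥0∞) :
    safeDiv (a * a') (b * b') = safeDiv a b * safeDiv a' b' := by
  by_cases hb : b = 0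
  · simp [safeDiv, hb]
  by_cases hb' : b' = 0
  · simp [safeDiv, hb']
  simp only [safeDiv, hb, hb', mul_eq_zero, or_self, if_false, div_eq_mul_inv]
  rw [ENNReal.mul_inv (Or.inl hb) (Or.inr hb')]
  ring

lemma safeDiv_prod {ι : Type*} (s : Finset ι) (a b : ι → ℝ≥0∞) :
    safeDiv (∏ i ∈ s, a i) (∏ i ∈ s, b i) = ∏ i ∈ s, safeDiv (a i) (b i) := by
  induction s using Finset.cons_induction with
  | empty => simp [safeDiv]
  | cons i s hi ih => simp only [Finset.prod_cons, safeDiv_mul_mul, ih]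

lemma safeDiv_rpow (a b : ℝ≥0∞) {w : ℝ} (hw : 0 ≤ w) :
    safeDiv (a ^ w) (b ^ w) = safeDiv a b ^ w := by
  rcases hw.eq_or_lt with rfl | hw_pos
  · simp [safeDiv]
  by_cases hb : b = 0
  · simp [safeDiv, hb, hw_pos]
  · simp [safeDiv, hb, hw, hw_pos, ENNReal.rpow_eq_zero_iff, ENNReal.div_rpow_of_nonneg]

lemma measurable_safeDiv {A : Type*} [MeasurableSpace A] {f g : A → ℝ≥0∞}
    (hf : Measurable f) (hg : Measurable g) : Measurable fun x ↦ safeDiv (f x) (g x) :=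
  Measurable.ite (hg (measurableSet_singleton 0)) measurable_const (hf.div hg)

lemma isProbabilityMeasure_withDensity_of_lintegral_eq_one {A : Type*} [MeasurableSpace A]
    {ν : Measure A} {f : A → ℝ≥0∞} (hf : ∫⁻ x, f x ∂ν = 1) :
    IsProbabilityMeasure (ν.withDensity f) :=
  ⟨by rw [withDensity_apply _ MeasurableSet.univ, Measure.restrict_univ, hf]⟩

lemma lintegral_prod_rpow_le_one {A ι : Type*} [MeasurableSpace A] [Fintype ι] {ν : Measure A}
    {F : ι → A → ℝ≥0∞} {w : ι → ℝ} (hF : ∀ i, AEMeasurable (F i) ν)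
    (hF_le : ∀ i, ∫⁻ x, F i x ∂ν ≤ 1) (hw : ∀ i, 0 ≤ w i) (hw_sum : ∑ i, w i = 1) :
    ∫⁻ x, ∏ i, F i x ^ w i ∂ν ≤ 1 :=
  (ENNReal.lintegral_prod_norm_pow_le Finset.univ (fun i _ ↦ hF i) hw_sum fun i _ ↦ hw i).trans <|
    Finset.prod_le_one' fun i _ ↦ ENNReal.rpow_le_one (hF_le i) (hw i)

lemma lintegral_fintype_prod_eq_prod {ι : Type*} [Fintype ι] {E : ι → Type*}
    [∀ i, MeasurableSpace (E i)] (ν : ∀ i, Measure (E i)) [∀ i, IsProbabilityMeasure (ν i)]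
    {f : ∀ i, E i → ℝ≥0∞} (hf : ∀ i, Measurable (f i)) :
    ∫⁻ x, ∏ i, f i (x i) ∂Measure.pi ν = ∏ i, ∫⁻ y, f i y ∂ν i := by
  have hindep : ProbabilityTheory.iIndepFun (fun i (x : ∀ i, E i) ↦ f i (x i)) (Measure.pi ν) :=
    ProbabilityTheory.iIndepFun_pi fun i ↦ (hf i).aemeasurable
  rw [ProbabilityTheory.lintegral_prod_eq_prod_lintegral_of_indepFun _ _ hindep
    fun i ↦ (hf i).comp (measurable_pi_apply i)]
  exact Finset.prod_congr rfl fun i _ ↦ (measurePreserving_eval ν i).lintegral_comp (hf i)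

section Marginal

variable (μ : ∀ i, Measure (π i))

lemma dependsOn_marginal (S : Finset (Fin d)) (f : (∀ i, π i) → ℝ≥0∞) :
    DependsOn (marginal μ S f) (S : Set (Fin d)) := fun _ _ hxy ↦
  lmarginal_congr μ f fun i hi ↦ hxy i (by simpa using hi)

lemma marginal_mul_of_dependsOn {S : Finset (Fin d)} {h f : (∀ i, π i) → ℝ≥0∞}
    (hh : DependsOn h (S : Set (Fin d))) (hf : Measurable f) (x : ∀ i, π i) :
    marginal μ S (fun y ↦ h y * f y) x = h x * marginal μ S f x := by
  have hh_update (y : ∀ i : (Sᶜ : Finset (Fin d)), π i) :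
      h (Function.updateFinset x Sᶜ y) = h x :=
    hh fun i hi ↦ by simp [Function.updateFinset, Finset.mem_coe.mp hi]
  simp only [marginal, lmarginal, hh_update]
  exact lintegral_const_mul _ (hf.comp measurable_updateFinset)

variable [∀ i, SigmaFinite (μ i)]

lemma measurable_marginal_uncurry {Θ : Type*} [MeasurableSpace Θ] {p : Θ → (∀ i, π i) → ℝ≥0∞}
    (hp : Measurable (Function.uncurry p)) (S : Finset (Fin d)) :
    Measurable fun z : Θ × (∀ i, π i) ↦ marginal μ S (p z.1) z.2 :=
  Measurable.lintegral_prod_right' <| hp.comp <| (measurable_fst.comp measurable_fst).prodMk <|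
    measurable_updateFinset'.comp ((measurable_snd.comp measurable_fst).prodMk measurable_snd)

lemma measurable_marginal (S : Finset (Fin d)) {f : (∀ i, π i) → ℝ≥0∞} (hf : Measurable f) :
    Measurable (marginal μ S f) :=
  hf.lmarginal μ

lemma measurable_condDens (T1 T2 : Finset (Fin d)) {f : (∀ i, π i) → ℝ≥0∞} (hf : Measurable f) :
    Measurable (condDens μ T1 T2 f) :=
  measurable_safeDiv (measurable_marginal μ _ hf) (measurable_marginal μ _ hf)

lemma lintegral_mul_le_of_mul_marginal_le {S : Finset (Fin d)} {h k f g : (∀ i, π i) → ℝ≥0∞}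
    (hh : DependsOn h (S : Set (Fin d))) (hk : DependsOn k (S : Set (Fin d)))
    (hh_meas : Measurable h) (hk_meas : Measurable k) (hf : Measurable f) (hg : Measurable g)
    (hle : ∀ x, h x * marginal μ S f x ≤ k x * marginal μ S g x) :
    ∫⁻ x, h x * f x ∂Measure.pi μ ≤ ∫⁻ x, k x * g x ∂Measure.pi μ :=
  lintegral_le_of_lmarginal_le Sᶜ (hh_meas.mul hf) (hk_meas.mul hg) fun x ↦
    calc marginal μ S (fun y ↦ h y * f y) x
        = h x * marginal μ S f x := marginal_mul_of_dependsOn μ hh hf x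
      _ ≤ k x * marginal μ S g x := hle x
      _ = marginal μ S (fun y ↦ k y * g y) x := (marginal_mul_of_dependsOn μ hk hg x).symm

variable {f g : (∀ i, π i) → ℝ≥0∞}

lemma lintegral_safeDiv_marginal_mul_le (S : Finset (Fin d)) (hf : Measurable f)
    (hg : Measurable g) :
    ∫⁻ x, safeDiv (marginal μ S g x) (marginal μ S f x) * f x ∂Measure.pi μ
      ≤ ∫⁻ x, g x ∂Measure.pi μ := by
  have hratio : DependsOn (fun x ↦ safeDiv (marginal μ S g x) (marginal μ S f x))
      (S : Set (Fin d)) := fun _ _ hxy ↦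
    congrArg₂ safeDiv (dependsOn_marginal μ S g hxy) (dependsOn_marginal μ S f hxy)
  simpa only [one_mul] using lintegral_mul_le_of_mul_marginal_le μ (k := fun _ ↦ 1) hratio
    (fun _ _ _ ↦ rfl) (measurable_safeDiv (measurable_marginal μ S hg) (measurable_marginal μ S hf))
    measurable_const hf hg fun x ↦ by simpa only [one_mul] using safeDiv_mul_le _ _

lemma lintegral_safeDiv_condDens_mul_le (T1 T2 : Finset (Fin d)) (hf : Measurable f)
    (hg : Measurable g) :
    ∫⁻ x, safeDiv (condDens μ T1 T2 g x) (condDens μ T1 T2 f x) * f x ∂Measure.pi μ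
      ≤ ∫⁻ x, f x ∂Measure.pi μ := by
  have hmarginal (u : (∀ i, π i) → ℝ≥0∞) :
      DependsOn (marginal μ T2 u) ((T1 ∪ T2 : Finset (Fin d)) : Set (Fin d)) := fun _ _ hxy ↦
    dependsOn_marginal μ T2 u fun i hi ↦ hxy i (Finset.mem_union_right T1 hi)
  have hcondDens (u : (∀ i, π i) → ℝ≥0∞) :
      DependsOn (condDens μ T1 T2 u) ((T1 ∪ T2 : Finset (Fin d)) : Set (Fin d)) := fun _ _ hxy ↦
    congrArg₂ safeDiv (dependsOn_marginal μ _ u hxy) (hmarginal u hxy)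
  calc ∫⁻ x, safeDiv (condDens μ T1 T2 g x) (condDens μ T1 T2 f x) * f x ∂Measure.pi μ
      ≤ ∫⁻ x, safeDiv (marginal μ T2 f x) (marginal μ T2 g x) * g x ∂Measure.pi μ := by
        refine lintegral_mul_le_of_mul_marginal_le μ (S := T1 ∪ T2)
          (fun _ _ hxy ↦ congrArg₂ safeDiv (hcondDens g hxy) (hcondDens f hxy))
          (fun _ _ hxy ↦ congrArg₂ safeDiv (hmarginal f hxy) (hmarginal g hxy))
          (measurable_safeDiv (measurable_condDens μ T1 T2 hg) (measurable_condDens μ T1 T2 hf))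
          (measurable_safeDiv (measurable_marginal μ T2 hf) (measurable_marginal μ T2 hg))
          hf hg fun x ↦ ?_
        rw [safeDiv_mul_comm (marginal μ T2 f x)]
        exact safeDiv_safeDiv_mul_le _ _ _
    _ ≤ ∫⁻ x, f x ∂Measure.pi μ := lintegral_safeDiv_marginal_mul_le μ T2 hg hf

end Marginal

section CompositeLikelihood

variable (μ : ∀ i, Measure (π i)) {α : Sd d → ℝ} {β : Td d → ℝ} {γ : ℝ}

lemma safeDiv_compLik (hα : ∀ S, 0 ≤ α S / γ) (hβ : ∀ T, 0 ≤ β T / γ)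
    (f g : (∀ i, π i) → ℝ≥0∞) (x : ∀ i, π i) :
    safeDiv (compLik μ α β γ g x) (compLik μ α β γ f x) =
      (∏ S : Sd d, safeDiv (marginal μ S.1 g x) (marginal μ S.1 f x) ^ (α S / γ)) *
      ∏ T : Td d,
        safeDiv (condDens μ T.1.1 T.1.2 g x) (condDens μ T.1.1 T.1.2 f x) ^ (β T / γ) := by
  simp only [compLik, safeDiv_mul_mul, safeDiv_prod, safeDiv_rpow _ _ (hα _),
    safeDiv_rpow _ _ (hβ _)]

variable [∀ i, SigmaFinite (μ i)]

lemma measurable_compLik_comp {A Θ : Type*} [MeasurableSpace A] [MeasurableSpace Θ]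
    {p : Θ → (∀ i, π i) → ℝ≥0∞} (hp : Measurable (Function.uncurry p)) (α : Sd d → ℝ)
    (β : Td d → ℝ) (γ : ℝ) {θ : A → Θ} {x : A → ∀ i, π i} (hθ : Measurable θ)
    (hx : Measurable x) : Measurable fun a ↦ compLik μ α β γ (p (θ a)) (x a) := by
  have hmarginal (S : Finset (Fin d)) : Measurable fun a ↦ marginal μ S (p (θ a)) (x a) :=
    (measurable_marginal_uncurry μ hp S).comp (hθ.prodMk hx)
  exact (Finset.measurable_fun_prod _ fun S _ ↦ (hmarginal S.1).pow_const _).mul <|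
    Finset.measurable_fun_prod _ fun T _ ↦
      (measurable_safeDiv (hmarginal (T.1.1 ∪ T.1.2)) (hmarginal T.1.2)).pow_const _

lemma measurable_compLik (α : Sd d → ℝ) (β : Td d → ℝ) (γ : ℝ) {f : (∀ i, π i) → ℝ≥0∞}
    (hf : Measurable f) : Measurable (compLik μ α β γ f) :=
  (Finset.measurable_fun_prod _ fun S _ ↦ (measurable_marginal μ S.1 hf).pow_const _).mul <|
  Finset.measurable_fun_prod _ fun T _ ↦ (measurable_condDens μ T.1.1 T.1.2 hf).pow_const _

lemma lintegral_safeDiv_compLik_le_one (hα : ∀ S, 0 ≤ α S) (hβ : ∀ T, 0 ≤ β T)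
    (hγ : γ = ∑ S, α S + ∑ T, β T) (hγ_pos : 0 < γ) {f g : (∀ i, π i) → ℝ≥0∞}
    (hf : Measurable f) (hg : Measurable g)
    (hf_le : ∫⁻ x, f x ∂Measure.pi μ ≤ 1) (hg_le : ∫⁻ x, g x ∂Measure.pi μ ≤ 1) :
    ∫⁻ x, safeDiv (compLik μ α β γ g x) (compLik μ α β γ f x)
      ∂(Measure.pi μ).withDensity f ≤ 1 := by
  let ratio : Sd d ⊕ Td d → (∀ i, π i) → ℝ≥0∞ := Sum.elim
    (fun S x ↦ safeDiv (marginal μ S.1 g x) (marginal μ S.1 f x))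
    (fun T x ↦ safeDiv (condDens μ T.1.1 T.1.2 g x) (condDens μ T.1.1 T.1.2 f x))
  let w : Sd d ⊕ Td d → ℝ := Sum.elim (fun S ↦ α S / γ) (fun T ↦ β T / γ)
  have hw : ∀ i, 0 ≤ w i :=
    Sum.rec (fun S ↦ div_nonneg (hα S) hγ_pos.le) fun T ↦ div_nonneg (hβ T) hγ_pos.le
  have hw_sum : ∑ i, w i = 1 := by
    simp only [w, Fintype.sum_sum_type, Sum.elim_inl, Sum.elim_inr]
    rw [← Finset.sum_div, ← Finset.sum_div, ← add_div, ← hγ, div_self hγ_pos.ne']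
  have hratio_meas : ∀ i, Measurable (ratio i) := Sum.rec
    (fun S ↦ measurable_safeDiv (measurable_marginal μ _ hg) (measurable_marginal μ _ hf))
    fun T ↦ measurable_safeDiv (measurable_condDens μ _ _ hg) (measurable_condDens μ _ _ hf)
  have hratio_le (i) : ∫⁻ x, ratio i x ∂(Measure.pi μ).withDensity f ≤ 1 := by
    rw [lintegral_withDensity_eq_lintegral_mul _ hf (hratio_meas i)]
    simp only [Pi.mul_apply, mul_comm (f _)]
    rcases i with S | T
    · exact (lintegral_safeDiv_marginal_mul_le μ S.1 hf hg).trans hg_le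
    · exact (lintegral_safeDiv_condDens_mul_le μ T.1.1 T.1.2 hf hg).trans hf_le
  calc ∫⁻ x, safeDiv (compLik μ α β γ g x) (compLik μ α β γ f x) ∂(Measure.pi μ).withDensity f
      = ∫⁻ x, ∏ i, ratio i x ^ w i ∂(Measure.pi μ).withDensity f := by
        simp only [safeDiv_compLik μ (fun S ↦ hw (.inl S)) (fun T ↦ hw (.inr T)),
          Fintype.prod_sum_type, ratio, w, Sum.elim_inl, Sum.elim_inr]
    _ ≤ 1 := lintegral_prod_rpow_le_one (fun i ↦ (hratio_meas i).aemeasurable) hratio_le hw hw_sum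

end CompositeLikelihood

section SampleRatio

variable {ι : Type*} [Fintype ι]

/-- The composite likelihood ratio `L_{α,β}(g; x) / L_{α,β}(f; x)` of the density `g` against the
density `f` on a sample `x` indexed by `ι`, equal to `0` when the denominator vanishes. For
`g = p(·;θ̃)` and `f = p(·;θ)` it is the statistic `U_{α,β,n}(θ)`. -/
def compLikRatio (μ : ∀ i, Measure (π i)) (α : Sd d → ℝ) (β : Td d → ℝ) (γ : ℝ)
    (g f : (∀ i, π i) → ℝ≥0∞) (x : ι → ∀ i, π i) : ℝ≥0∞ :=
  safeDiv (∏ j, compLik μ α β γ g (x j)) (∏ j, compLik μ α β γ f (x j))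

variable (μ : ∀ i, Measure (π i)) [∀ i, SigmaFinite (μ i)] {α : Sd d → ℝ} {β : Td d → ℝ} {γ : ℝ}
  {Θ : Type*} [MeasurableSpace Θ] {p : Θ → (∀ i, π i) → ℝ≥0∞}

lemma measurable_compLikRatio (hp : Measurable (Function.uncurry p)) (α : Sd d → ℝ)
    (β : Td d → ℝ) (γ : ℝ) (θ₀ : Θ) {A : Type*} [MeasurableSpace A] {θ : A → Θ}
    {x : A → ι → ∀ i, π i} (hθ : Measurable θ) (hx : Measurable x) :
    Measurable fun a ↦ compLikRatio μ α β γ (p (θ a)) (p θ₀) (x a) := by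
  have hcoord (j : ι) : Measurable fun a ↦ x a j := (measurable_pi_apply j).comp hx
  exact measurable_safeDiv
    (Finset.measurable_fun_prod _ fun j _ ↦ measurable_compLik_comp μ hp α β γ hθ (hcoord j))
    (Finset.measurable_fun_prod _ fun j _ ↦
      measurable_compLik_comp μ hp α β γ measurable_const (hcoord j))

lemma lintegral_compLikRatio_le_one (hα : ∀ S, 0 ≤ α S) (hβ : ∀ T, 0 ≤ β T)
    (hγ : γ = ∑ S, α S + ∑ T, β T) (hγ_pos : 0 < γ) {f g : (∀ i, π i) → ℝ≥0∞}
    (hf : Measurable f) (hg : Measurable g)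
    (hf_prob : ∫⁻ x, f x ∂Measure.pi μ = 1) (hg_le : ∫⁻ x, g x ∂Measure.pi μ ≤ 1) :
    ∫⁻ x, compLikRatio μ α β γ g f x
      ∂Measure.pi (fun _ : ι ↦ (Measure.pi μ).withDensity f) ≤ 1 := by
  have := isProbabilityMeasure_withDensity_of_lintegral_eq_one hf_prob
  have hratio : Measurable fun x ↦ safeDiv (compLik μ α β γ g x) (compLik μ α β γ f x) :=
    measurable_safeDiv (measurable_compLik μ α β γ hg) (measurable_compLik μ α β γ hf)
  simp only [compLikRatio, safeDiv_prod]
  rw [lintegral_fintype_prod_eq_prod _ fun _ ↦ hratio]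
  exact Finset.prod_le_one' fun _ _ ↦
    lintegral_safeDiv_compLik_le_one μ hα hβ hγ hγ_pos hf hg hf_prob.le hg_le

end SampleRatio

section Freezing

variable {Ω A B : Type*} [MeasurableSpace Ω] [MeasurableSpace A] [mB : MeasurableSpace B]
  {Pr : Measure Ω} {P : Measure A} {Q : Measure B} {Y : Ω → A} {Z : Ω → B} {h : A × B → ℝ≥0∞}

lemma setLIntegral_preimage_of_hasLaw_prod [SFinite P] [SFinite Q]
    (hYZ : ProbabilityTheory.HasLaw (fun ω ↦ (Y ω, Z ω)) (P.prod Q) Pr) (hZ : Measurable Z)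
    (hh : Measurable h) {t : Set B} (ht : MeasurableSet t) :
    ∫⁻ ω in Z ⁻¹' t, h (Y ω, Z ω) ∂Pr = ∫⁻ b in t, ∫⁻ a, h (a, b) ∂P ∂Q := by
  have ht_prod : MeasurableSet (Prod.snd ⁻¹' t : Set (A × B)) := measurable_snd ht
  calc ∫⁻ ω in Z ⁻¹' t, h (Y ω, Z ω) ∂Pr
      = ∫⁻ ω, (Prod.snd ⁻¹' t).indicator h (Y ω, Z ω) ∂Pr := (lintegral_indicator (hZ ht) _).symm
    _ = ∫⁻ z in Prod.snd ⁻¹' t, h z ∂P.prod Q := by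
        rw [hYZ.lintegral_comp (hh.indicator ht_prod).aemeasurable, lintegral_indicator ht_prod]
    _ = ∫⁻ b in t, ∫⁻ a, h (a, b) ∂P ∂Q := by
        rw [← Set.univ_prod, ← Measure.prod_restrict, Measure.restrict_univ,
          lintegral_prod_symm' _ hh]

lemma condLExp_prodMk_ae_eq_lintegral [IsProbabilityMeasure P] [IsFiniteMeasure Q]
    (hYZ : ProbabilityTheory.HasLaw (fun ω ↦ (Y ω, Z ω)) (P.prod Q) Pr) (hZ : Measurable Z)
    (hh : Measurable h) :
    Pr⁻[fun ω ↦ h (Y ω, Z ω) | mB.comap Z] =ᵐ[Pr] fun ω ↦ ∫⁻ a, h (a, Z ω) ∂P := by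
  have := hYZ.isFiniteMeasure
  have hfrozen : Measurable fun b ↦ ∫⁻ a, h (a, b) ∂P := hh.lintegral_prod_left'
  refine (ae_eq_condLExp hZ.comap_le Pr _ (hfrozen.comp (comap_measurable Z)) ?_).symm
  rintro _ ⟨t, ht, rfl⟩
  rw [setLIntegral_preimage_of_hasLaw_prod hYZ hZ hh ht]
  simpa using
    setLIntegral_preimage_of_hasLaw_prod hYZ hZ (hfrozen.comp measurable_snd) ht

lemma condExp_toReal_prodMk_ae_le [IsProbabilityMeasure P] [IsFiniteMeasure Q]
    (hYZ : ProbabilityTheory.HasLaw (fun ω ↦ (Y ω, Z ω)) (P.prod Q) Pr) (hZ : Measurable Z)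
    (hh : Measurable h) {c : NNReal} (hc : ∀ b, ∫⁻ a, h (a, b) ∂P ≤ c) :
    ∀ᵐ ω ∂Pr, (Pr[fun ω' ↦ (h (Y ω', Z ω')).toReal | mB.comap Z]) ω ≤ c := by
  have hfinite : ∫⁻ ω, h (Y ω, Z ω) ∂Pr ≠ ∞ := by
    have hle : ∫⁻ ω, h (Y ω, Z ω) ∂Pr ≤ c * Q Set.univ := by
      rw [hYZ.lintegral_comp hh.aemeasurable, lintegral_prod_symm' _ hh]
      exact (lintegral_mono hc).trans (lintegral_const _).le
    exact (hle.trans_lt (by finiteness)).ne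
  have hmeas : AEMeasurable (fun ω ↦ h (Y ω, Z ω)) Pr := hh.comp_aemeasurable hYZ.aemeasurable
  filter_upwards [toReal_condLExp (mB.comap Z) hmeas hfinite,
    condLExp_prodMk_ae_eq_lintegral hYZ hZ hh] with ω htoReal hfrozen
  rw [← htoReal, hfrozen]
  exact ENNReal.toReal_le_coe_of_le_coe (hc _)

end Freezing

theorem split_CLRS_condexp_le_one_general
    (μ : ∀ i, Measure (π i)) [∀ i, SigmaFinite (μ i)]
    {Θ : Type*} [MeasurableSpace Θ] (p : Θ → (∀ i, π i) → ℝ≥0∞)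
    (hp_meas : Measurable (Function.uncurry p))
    (hp_prob : ∀ θ : Θ, ∫⁻ x, p θ x ∂(Measure.pi μ) = 1)
    (α : Sd d → ℝ) (β : Td d → ℝ) (hα : ∀ S, 0 ≤ α S) (hβ : ∀ T, 0 ≤ β T)
    (γ : ℝ) (hγ : γ = ∑ S, α S + ∑ T, β T) (hγpos : 0 < γ)
    {Ω : Type*} [MeasurableSpace Ω] (Pr : Measure Ω) (θstar : Θ)
    {ι B : Type*} [Fintype ι] [mB : MeasurableSpace B]
    (X : ι → Ω → (∀ i, π i)) (Z : Ω → B) (hZ : Measurable Z) (Q : Measure B) [IsFiniteMeasure Q]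
    (hlaw : ProbabilityTheory.HasLaw (fun ω ↦ (fun j ↦ X j ω, Z ω))
      ((Measure.pi fun _ : ι ↦ (Measure.pi μ).withDensity (p θstar)).prod Q) Pr)
    (t : B → Θ) (ht : Measurable t) :
    ∀ᵐ ω ∂Pr, (Pr[fun ω' ↦ (compLikRatio μ α β γ (p (t (Z ω'))) (p θstar) fun j ↦ X j ω').toReal |
      mB.comap Z]) ω ≤ 1 := by
  have := isProbabilityMeasure_withDensity_of_lintegral_eq_one (hp_prob θstar)
  have hp (θ : Θ) : Measurable (p θ) := hp_meas.comp measurable_prodMk_left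
  have hratio : Measurable fun z : (ι → ∀ i, π i) × B ↦
      compLikRatio μ α β γ (p (t z.2)) (p θstar) z.1 :=
    measurable_compLikRatio μ hp_meas α β γ θstar (ht.comp measurable_snd) measurable_fst
  have hfrozen (b : B) : ∫⁻ x, compLikRatio μ α β γ (p (t b)) (p θstar) x
      ∂Measure.pi (fun _ : ι ↦ (Measure.pi μ).withDensity (p θstar)) ≤ (1 : NNReal) := by
    rw [ENNReal.coe_one]
    exact lintegral_compLikRatio_le_one μ hα hβ hγ hγpos (hp θstar) (hp (t b)) (hp_prob θstar)
      (hp_prob (t b)).le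
  simpa only [NNReal.coe_one] using condExp_toReal_prodMk_ae_le hlaw hZ hratio hfrozen

/-- The conditional expectation of the split composite likelihood
ratio statistic at the true parameter, given `σ(X_n^1)`, is almost surely at most
one: `E_{θ*}[U_{α,β,n}^0(θ*) | σ(X_n^1)] ≤ 1` a.s., for every `n ∈ ℕ`. -/
theorem split_CLRS_condexp_le_one
    {d : ℕ} (hd : 1 ≤ d)
    {π : Fin d → Type*} [∀ i, MeasurableSpace (π i)]
    (μ : ∀ i, Measure (π i)) [∀ i, SigmaFinite (μ i)]
    {Θ : Type*} [MeasurableSpace Θ]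
    (p : Θ → (∀ i, π i) → ℝ≥0∞)
    (hp_meas : Measurable (Function.uncurry p))
    (hp_prob : ∀ θ : Θ, ∫⁻ x, p θ x ∂(Measure.pi μ) = 1)
    (α : Sd d → ℝ) (β : Td d → ℝ)
    (hα : ∀ S, 0 ≤ α S) (hβ : ∀ T, 0 ≤ β T)
    (γ : ℝ) (hγ : γ = ∑ S, α S + ∑ T, β T) (hγpos : 0 < γ)
    {Ω : Type*} [MeasurableSpace Ω]
    (Pr : Measure Ω) [IsProbabilityMeasure Pr]
    (θstar : Θ) (n : ℕ)
    -- the two halves `X_n^0` and `X_n^1` of the i.i.d. sample of size `2n`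
    (X0 X1 : Fin n → Ω → (∀ i, π i))
    (hX0 : ∀ j, Measurable (X0 j)) (hX1 : ∀ j, Measurable (X1 j))
    -- the `2n` observations are i.i.d. with density `p(·;θ*)` w.r.t. `μ`
    (hlaw : Measure.map (fun ω => (fun j => X0 j ω, fun j => X1 j ω)) Pr
      = (Measure.pi fun _ : Fin n => (Measure.pi μ).withDensity (p θstar)).prod
          (Measure.pi fun _ : Fin n => (Measure.pi μ).withDensity (p θstar)))
    -- the estimators `θ̃_n^0`, `θ̃_n^1` are measurable functions of `X_n^0`, `X_n^1` alone
    (t0 t1 : (Fin n → ∀ i, π i) → Θ)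
    (ht0 : Measurable t0) (ht1 : Measurable t1) :
    ∀ᵐ ω ∂Pr,
      (Pr[(fun ω' => (safeDiv
            (∏ j : Fin n, compLik μ α β γ (p (t1 fun j' => X1 j' ω')) (X0 j ω'))
            (∏ j : Fin n, compLik μ α β γ (p θstar) (X0 j ω'))).toReal) |
          MeasurableSpace.comap (fun ω' => fun j => X1 j ω')
            (inferInstance : MeasurableSpace (Fin n → ∀ i, π i))]) ω ≤ 1 := by
  have := isProbabilityMeasure_withDensity_of_lintegral_eq_one (hp_prob θstar)
  exact split_CLRS_condexp_le_one_general μ p hp_meas hp_prob α β hα hβ γ hγ hγpos Pr θstar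
    X0 (fun ω j ↦ X1 j ω) (by fun_prop) _ ⟨by fun_prop, hlaw⟩ t1 ht1
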